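/- On ℝⁿ with coordinates c₁,…,cₙ (indices mod n, n ≥ 5), the bivector Q with components Q^{ij} = cᵢcⱼ(cᵢ+cⱼ)(δ_{i+1,j} - δ_{j+1,i}) + cᵢc_{i+1}c_{i+2}δ_{i+2,j} - cᵢc_{i-1}c_{i-2}δ_{i-2,j} satisfies the Jacobi identity, i.e., Q is a Poisson tensor. -/

import Mathlib

open scoped BigOperators

/-- Partial derivative of a function on `ℝ^n` in the `i`-th coordinate direction. -/
noncomputable def pderiv {n : ℕ} (i : Fin n) (f : (Fin n → ℝ) → ℝ) (x : Fin n → ℝ) : ℝ :=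
  fderiv ℝ f x (Pi.single i 1)

/-- The Jacobi identity for a bivector field written in coordinates. -/
def JacobiId {n : ℕ} (P : (Fin n → ℝ) → Fin n → Fin n → ℝ) : Prop :=
  ∀ x i j k, ∑ l, (P x l j * pderiv l (fun y => P y i k) x
    + P x l i * pderiv l (fun y => P y k j) x
    + P x l k * pderiv l (fun y => P y j i) x) = 0

/-- Kronecker delta on `Fin n`, valued in `ℝ`. -/
def kdelta {n : ℕ} (i j : Fin n) : ℝ := if i = j then 1 else 0

/-- The quadratic Poisson tensor of the periodic `n`-site Volterra lattice:
`P^{ij} = cᵢ cⱼ (δ_{i+1,j} - δ_{j+1,i})`, indices mod `n`. -/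
def Pvolt {n : ℕ} [NeZero n] (c : Fin n → ℝ) (i j : Fin n) : ℝ :=
  c i * c j * (kdelta (i + 1) j - kdelta (j + 1) i)

/-- The cubic Poisson tensor of the periodic `n`-site Volterra lattice. -/
def Qvolt {n : ℕ} [NeZero n] (c : Fin n → ℝ) (i j : Fin n) : ℝ :=
  c i * c j * (c i + c j) * (kdelta (i + 1) j - kdelta (j + 1) i)
    + c i * c (i + 1) * c (i + 2) * kdelta (i + 2) j
    - c i * c (i - 1) * c (i - 2) * kdelta (i - 2) j

/-!
In the logarithmic coordinates `uᵢ = log cᵢ` the bracket is linear in `c`, and it is a sum of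
decomposable bivectors: with `sₘ = eₘ + eₘ₊₁`,
`{uᵢ, uⱼ} = ∑ₘ cₘ (sₘ₋₁ ∧ sₘ)ᵢⱼ`.
The vector fields `sₘ` commute, so the Jacobiator only sees the derivatives of the coefficients
`cₘ`. It equals `∑ₘ cₘ (sₘ₋₁ ∧ sₘ) ∧ (cₘ (sₘ - sₘ₋₁) + cₘ₊₁ sₘ₊₁ - cₘ₋₁ sₘ₋₂)`, whose summands
are `Fₘ - Fₘ₋₁` for `Fₘ = cₘ cₘ₊₁ sₘ₋₁ ∧ sₘ ∧ sₘ₊₁`, so the sum over the cycle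
telescopes.
-/

section Wedge

variable {ι R : Type*} [CommRing R]

/-- The component `(a ∧ b)ᵢⱼ` of the wedge product of two vectors. -/
def wedge (a b : ι → R) (i j : ι) : R := a i * b j - b i * a j

lemma wedge_swap (a b : ι → R) (i j : ι) : wedge a b j i = -wedge a b i j := by
  simp only [wedge]; ring

/-- The component `(a ∧ b ∧ c)ᵢⱼₖ` of the wedge product of three vectors, as a cyclic sum over the
indices: this is how triple products arise in the Jacobi identity. -/
def wedge₃ (a b c : ι → R) (i j k : ι) : R :=
  wedge a b i j * c k + wedge a b j k * c i + wedge a b k i * c j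

lemma wedge₃_rotate (a b c : ι → R) (i j k : ι) : wedge₃ a b c i j k = wedge₃ c a b i j k := by
  simp only [wedge₃, wedge]; ring

lemma wedge₃_self_left (a b : ι → R) (i j k : ι) : wedge₃ a b a i j k = 0 := by
  simp only [wedge₃, wedge]; ring

lemma wedge₃_self_right (a b : ι → R) (i j k : ι) : wedge₃ a b b i j k = 0 := by
  simp only [wedge₃, wedge]; ring

lemma wedge₃_add_right (a b c d : ι → R) (i j k : ι) :
    wedge₃ a b (c + d) i j k = wedge₃ a b c i j k + wedge₃ a b d i j k := by
  simp only [wedge₃, Pi.add_apply]; ring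

lemma wedge₃_sub_right (a b c d : ι → R) (i j k : ι) :
    wedge₃ a b (c - d) i j k = wedge₃ a b c i j k - wedge₃ a b d i j k := by
  simp only [wedge₃, Pi.sub_apply]; ring

lemma wedge₃_smul_right (r : R) (a b c : ι → R) (i j k : ι) :
    wedge₃ a b (r • c) i j k = r * wedge₃ a b c i j k := by
  simp only [wedge₃, Pi.smul_apply, smul_eq_mul]; ring

end Wedge

section LogLinear

variable {n : ℕ}

lemma sum_mul_pderiv (f : (Fin n → ℝ) → ℝ) (x v : Fin n → ℝ) :
    ∑ l, v l * pderiv l f x = fderiv ℝ f x v := by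
  conv_rhs => rw [pi_eq_sum_univ' v]
  simp [pderiv, map_sum]

variable (ω : Fin n → Fin n → Fin n → ℝ)

/-- The matrix `∑ₘ xₘ ωₘ` of brackets `{log xᵢ, log xⱼ}` when these are linear in `x`. -/
def logBracket (x : Fin n → ℝ) (i j : Fin n) : ℝ := ∑ m, x m * ω m i j

/-- The bivector `xᵢ xⱼ {log xᵢ, log xⱼ}` whose logarithmic brackets are given by `logBracket`. -/
def logLinearBivector (x : Fin n → ℝ) (i j : Fin n) : ℝ := x i * x j * logBracket ω x i j

lemma fderiv_logLinearBivector (x v : Fin n → ℝ) (i j : Fin n) :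
    fderiv ℝ (fun y => logLinearBivector ω y i j) x v =
      (v i * x j + x i * v j) * logBracket ω x i j + x i * x j * logBracket ω v i j := by
  have coord (m : Fin n) := hasFDerivAt_apply (𝕜 := ℝ) (F' := fun _ : Fin n => ℝ) m x
  have bracket : HasFDerivAt (fun y => logBracket ω y i j) _ x :=
    HasFDerivAt.fun_sum fun m (_ : m ∈ Finset.univ) => (coord m).mul_const (ω m i j)
  have bivector : HasFDerivAt (fun y => logLinearBivector ω y i j) _ x :=
    ((coord i).mul (coord j)).mul bracket
  rw [bivector.fderiv]
  simp only [Pi.mul_apply, logBracket, smul_add, add_apply, smul_apply, sum_apply,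
    ContinuousLinearMap.proj_apply, smul_eq_mul, mul_comm (ω _ i j)]
  ring

lemma sum_logLinearBivector_mul_pderiv (x : Fin n → ℝ) (i j k : Fin n) :
    ∑ l, logLinearBivector ω x l k * pderiv l (fun y => logLinearBivector ω y i j) x =
      x i * x j * x k * ((logBracket ω x i k + logBracket ω x j k) * logBracket ω x i j
        + ∑ m, x m * (ω m i j * logBracket ω x m k)) := by
  have along_column : logBracket ω (fun l => logLinearBivector ω x l k) i j =
      x k * ∑ m, x m * (ω m i j * logBracket ω x m k) := by
    rw [logBracket, Finset.mul_sum]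
    refine Finset.sum_congr rfl fun m _ => ?_
    rw [logLinearBivector]
    ring
  rw [sum_mul_pderiv _ x fun l => logLinearBivector ω x l k, fderiv_logLinearBivector,
    along_column]
  simp only [logLinearBivector]
  ring

variable {ω}

lemma logBracket_swap (hω : ∀ m i j, ω m j i = -ω m i j) (x : Fin n → ℝ) (i j : Fin n) :
    logBracket ω x j i = -logBracket ω x i j := by
  simp only [logBracket, hω _ i j, mul_neg, Finset.sum_neg_distrib]

theorem jacobiId_logLinearBivector (hω : ∀ m i j, ω m j i = -ω m i j)
    (hcyc : ∀ x i j k, ∑ m, x m * (ω m i j * logBracket ω x m k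
      + ω m j k * logBracket ω x m i + ω m k i * logBracket ω x m j) = 0) :
    JacobiId (logLinearBivector ω) := by
  intro x i j k
  have cyclic_sum := hcyc x i k j
  simp only [mul_add, Finset.sum_add_distrib] at cyclic_sum ⊢
  simp only [sum_logLinearBivector_mul_pderiv]
  rw [logBracket_swap hω x i j, logBracket_swap hω x j k, logBracket_swap hω x i k]
  linear_combination x i * x j * x k * cyclic_sum

end LogLinear

lemma kdelta_mul_apply {n : ℕ} (f : Fin n → ℝ) (i j : Fin n) :
    kdelta i j * f j = kdelta i j * f i := by
  by_cases h : i = j <;> simp [kdelta, h]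

section Volterra

variable {n : ℕ} [NeZero n]

/-- The vector `sₘ = eₘ + eₘ₊₁` carried by the bond between the neighbouring sites `m` and
`m + 1`. -/
def bond (m i : Fin n) : ℝ := kdelta m i + kdelta (m + 1) i

/-- The bivector `sₘ₋₁ ∧ sₘ` multiplying `cₘ` in the logarithmic brackets of the cubic Volterra
structure. -/
def bondWedge (m : Fin n) : Fin n → Fin n → ℝ := wedge (bond (m - 1)) (bond m)

lemma sum_bond_mul (f : Fin n → ℝ) (i : Fin n) : ∑ m, bond m i * f m = f i + f (i - 1) := by
  simp [bond, kdelta, add_mul, Finset.sum_add_distrib, ← eq_sub_iff_add_eq]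

lemma sum_bond_sub_one_mul (f : Fin n → ℝ) (i : Fin n) :
    ∑ m, bond (m - 1) i * f m = f (i + 1) + f i := by
  rw [← Equiv.sum_comp (Equiv.addRight (1 : Fin n))]
  simp only [Equiv.coe_addRight, add_sub_cancel_right]
  rw [sum_bond_mul fun m => f (m + 1), sub_add_cancel]

lemma logBracket_bondWedge (x : Fin n → ℝ) (i : Fin n) :
    logBracket bondWedge x i =
      x i • (bond i - bond (i - 1)) + x (i + 1) • bond (i + 1) - x (i - 1) • bond (i - 1 - 1) := by
  ext j
  calc logBracket bondWedge x i j
    _ = ∑ m, bond (m - 1) i * (x m * bond m j) - ∑ m, bond m i * (x m * bond (m - 1) j) := by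
      rw [← Finset.sum_sub_distrib]
      refine Finset.sum_congr rfl fun m _ => ?_
      simp only [bondWedge, wedge]
      ring
    _ = (x (i + 1) * bond (i + 1) j + x i * bond i j)
          - (x i * bond (i - 1) j + x (i - 1) * bond (i - 1 - 1) j) := by
      rw [sum_bond_sub_one_mul, sum_bond_mul]
    _ = _ := by
      simp only [Pi.add_apply, Pi.sub_apply, Pi.smul_apply, smul_eq_mul]
      ring

lemma Qvolt_eq_logLinearBivector (c : Fin n → ℝ) (i j : Fin n) :
    Qvolt c i j = logLinearBivector bondWedge c i j := by
  have add_two : i + 2 = i + 1 + 1 := by open Fin.CommRing in ring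
  have sub_two : i - 2 = i - 1 - 1 := by open Fin.CommRing in ring
  have kdelta_pred : kdelta (j + 1) i = kdelta (i - 1) j := by
    simp only [kdelta, sub_eq_iff_eq_add, eq_comm (a := i)]
  simp only [Qvolt, logLinearBivector, logBracket_bondWedge, bond, Pi.add_apply, Pi.sub_apply,
    Pi.smul_apply, smul_eq_mul, sub_add_cancel, add_two, sub_two, kdelta_pred]
  linear_combination c i * c j * kdelta_mul_apply c (i + 1) j
    - c i * c j * kdelta_mul_apply c (i - 1) j
    - c i * c (i + 1) * kdelta_mul_apply c (i + 1 + 1) j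
    + c i * c (i - 1) * kdelta_mul_apply c (i - 1 - 1) j

lemma sum_mul_wedge₃_logBracket_bondWedge (x : Fin n → ℝ) (i j k : Fin n) :
    ∑ m, x m * wedge₃ (bond (m - 1)) (bond m) (logBracket bondWedge x m) i j k = 0 := by
  let flux (m : Fin n) : ℝ :=
    x m * x (m + 1) * wedge₃ (bond (m - 1)) (bond m) (bond (m + 1)) i j k
  have telescoping (m : Fin n) :
      x m * wedge₃ (bond (m - 1)) (bond m) (logBracket bondWedge x m) i j k =
        flux m - flux (m - 1) := by
    simp only [flux, logBracket_bondWedge, wedge₃_sub_right, wedge₃_add_right, wedge₃_smul_right,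
      wedge₃_self_left, wedge₃_self_right, sub_add_cancel]
    rw [wedge₃_rotate (bond (m - 1)) (bond m) (bond (m - 1 - 1))]
    ring
  simp only [telescoping, Finset.sum_sub_distrib, sub_eq_zero]
  exact ((Equiv.subRight (1 : Fin n)).sum_comp flux).symm

end Volterra

theorem stmt7_general (n : ℕ) [NeZero n] : JacobiId (fun c => Qvolt (n := n) c) := by
  have log_linear : (fun c => Qvolt (n := n) c) = logLinearBivector bondWedge := by
    ext c i j
    exact Qvolt_eq_logLinearBivector c i j
  rw [log_linear]
  exact jacobiId_logLinearBivector (fun m => wedge_swap (bond (m - 1)) (bond m))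
    sum_mul_wedge₃_logBracket_bondWedge

/-- The cubic Volterra bivector satisfies the Jacobi identity. -/
theorem stmt7 (n : ℕ) [NeZero n] (hn : 5 ≤ n) : JacobiId (fun c => Qvolt (n := n) c) :=
  stmt7_general n
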